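/- The function h(γ) = E[tanh(√γ·Z + γ)], for Z standard Gaussian, is nondecreasing on [0,∞), with h(0) = 0 and h(γ) → 1 as γ → ∞. -/

import Mathlib

open MeasureTheory ProbabilityTheory Real Filter

/-!
Write `√γ Z + γ = √γ (Z + √γ)`. The law of `Z + √γ` is the law of `Z` exponentially tilted by the
weight `exp (√γ Z)`, whose expectation is `exp (γ / 2)`. Since `exp x * (1 - tanh x) = 1 / cosh x`,
expressing the integral against the law of `Z` gives
`h(γ) = 1 - exp (-γ / 2) * E[1 / cosh (√γ Z)]`. Both factors of the product are nonnegative and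
nonincreasing in `γ`; the second is at most `1` and the first tends to `0`.
-/

open scoped NNReal

section Hyperbolic

lemma continuous_tanh : Continuous tanh := by
  simp_rw [funext tanh_eq_sinh_div_cosh]
  exact continuous_sinh.div continuous_cosh fun x ↦ (cosh_pos x).ne'

lemma exp_mul_one_sub_tanh (x : ℝ) : exp x * (1 - tanh x) = (cosh x)⁻¹ := by
  have hcosh : cosh x ≠ 0 := (cosh_pos x).ne'
  calc exp x * (1 - tanh x)
      = exp x * (cosh x - sinh x) * (cosh x)⁻¹ := by rw [tanh_eq_sinh_div_cosh]; field_simp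
    _ = (cosh x)⁻¹ := by rw [cosh_sub_sinh, ← exp_add, add_neg_cancel, exp_zero, one_mul]

lemma inv_cosh_nonneg (x : ℝ) : 0 ≤ (cosh x)⁻¹ :=
  inv_nonneg.2 (cosh_pos x).le

lemma inv_cosh_le_one (x : ℝ) : (cosh x)⁻¹ ≤ 1 :=
  inv_le_one_of_one_le₀ (one_le_cosh x)

lemma antitoneOn_inv_cosh_mul (x : ℝ) : AntitoneOn (fun s ↦ (cosh (s * x))⁻¹) (Set.Ici 0) := by
  intro s hs t ht hst
  refine inv_anti₀ (cosh_pos _) (cosh_le_cosh.2 ?_)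
  rw [abs_mul, abs_mul, abs_of_nonneg (Set.mem_Ici.1 hs), abs_of_nonneg (Set.mem_Ici.1 ht)]
  gcongr

end Hyperbolic

section Integrals

variable {Ω : Type*} {mΩ : MeasurableSpace Ω} {μ : Measure Ω} {X : Ω → ℝ}

lemma integrable_tanh [IsFiniteMeasure μ] (hX : AEStronglyMeasurable X μ) :
    Integrable (fun ω ↦ tanh (X ω)) μ :=
  .of_bound (continuous_tanh.comp_aestronglyMeasurable hX) 1
    (ae_of_all _ fun ω ↦ (abs_tanh_lt_one (X ω)).le)

lemma integrable_inv_cosh [IsFiniteMeasure μ] (hX : AEStronglyMeasurable X μ) :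
    Integrable (fun ω ↦ (cosh (X ω))⁻¹) μ := by
  have hcont : Continuous fun x ↦ (cosh x)⁻¹ := continuous_cosh.inv₀ fun x ↦ (cosh_pos x).ne'
  refine .of_bound (hcont.comp_aestronglyMeasurable hX) 1 (ae_of_all _ fun ω ↦ ?_)
  rw [norm_of_nonneg (inv_cosh_nonneg _)]
  exact inv_cosh_le_one _

lemma integral_inv_cosh_nonneg : 0 ≤ ∫ ω, (cosh (X ω))⁻¹ ∂μ :=
  integral_nonneg fun ω ↦ inv_cosh_nonneg (X ω)

lemma integral_inv_cosh_le_one [IsProbabilityMeasure μ] : ∫ ω, (cosh (X ω))⁻¹ ∂μ ≤ 1 := by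
  simpa using integral_mono_of_nonneg (ae_of_all μ fun ω ↦ inv_cosh_nonneg (X ω))
    (integrable_const 1) (ae_of_all μ fun ω ↦ inv_cosh_le_one (X ω))

lemma antitoneOn_integral_inv_cosh_mul [IsFiniteMeasure μ] (hX : AEStronglyMeasurable X μ) :
    AntitoneOn (fun s : ℝ ↦ ∫ ω, (cosh (s * X ω))⁻¹ ∂μ) (Set.Ici 0) := fun s hs t ht hst ↦
  integral_mono (integrable_inv_cosh (hX.const_mul t)) (integrable_inv_cosh (hX.const_mul s))
    fun ω ↦ antitoneOn_inv_cosh_mul (X ω) hs ht hst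

lemma antitone_exp_mul_integral_inv_cosh [IsFiniteMeasure μ] (hX : AEStronglyMeasurable X μ) :
    Antitone fun γ : ℝ ↦ exp (-(γ / 2)) * ∫ ω, (cosh (√γ * X ω))⁻¹ ∂μ := by
  intro a b hab
  have hmean := antitoneOn_integral_inv_cosh_mul hX (sqrt_nonneg a) (sqrt_nonneg b)
    (sqrt_le_sqrt hab)
  exact mul_le_mul (by gcongr) hmean integral_inv_cosh_nonneg (exp_nonneg _)

lemma tendsto_exp_mul_integral_inv_cosh [IsProbabilityMeasure μ] :
    Tendsto (fun γ : ℝ ↦ exp (-(γ / 2)) * ∫ ω, (cosh (√γ * X ω))⁻¹ ∂μ) atTop (nhds 0) :=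
  squeeze_zero (fun _ ↦ mul_nonneg (exp_nonneg _) integral_inv_cosh_nonneg)
    (fun _ ↦ mul_le_of_le_one_right (exp_nonneg _) integral_inv_cosh_le_one)
    (tendsto_exp_neg_atTop_nhds_zero.comp (tendsto_id.atTop_div_const two_pos))

end Integrals

section Tilting

variable {Ω : Type*} {mΩ : MeasurableSpace Ω} {μ : Measure Ω} {X : Ω → ℝ} {t : ℝ}

lemma complexMGF_tilted_mul (z : ℂ) :
    complexMGF X (μ.tilted (t * X ·)) z = complexMGF X μ (z + t) / mgf X μ t := by
  simp only [complexMGF]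
  rw [integral_tilted_mul_eq_mgf, ← integral_div]
  refine integral_congr_ae (ae_of_all _ fun ω ↦ ?_)
  simp only [Complex.real_smul, Complex.ofReal_div, Complex.ofReal_exp, Complex.ofReal_mul,
    add_mul, Complex.exp_add]
  ring

lemma integral_tanh_tilted_mul [NeZero μ] (ht : Integrable (fun ω ↦ exp (t * X ω)) μ) :
    ∫ ω, tanh (t * X ω) ∂(μ.tilted (t * X ·))
      = 1 - (mgf X μ t)⁻¹ * ∫ ω, (cosh (t * X ω))⁻¹ ∂μ := by
  have := isProbabilityMeasure_tilted ht
  have hmeas : AEStronglyMeasurable (t * X ·) μ :=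
    (aemeasurable_of_aemeasurable_exp ht.aemeasurable).aestronglyMeasurable
  have hint : Integrable (fun ω ↦ tanh (t * X ω)) (μ.tilted (t * X ·)) :=
    integrable_tanh (hmeas.mono_ac (tilted_absolutelyContinuous _ _))
  have hdefect : ∫ ω, (1 - tanh (t * X ω)) ∂(μ.tilted (t * X ·))
      = (mgf X μ t)⁻¹ * ∫ ω, (cosh (t * X ω))⁻¹ ∂μ := by
    rw [integral_tilted_mul_eq_mgf, ← integral_const_mul]
    refine integral_congr_ae (ae_of_all _ fun ω ↦ ?_)
    simp only [smul_eq_mul, ← exp_mul_one_sub_tanh]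
    ring
  rw [integral_sub (integrable_const 1) hint, integral_const, probReal_univ, one_smul] at hdefect
  linarith

end Tilting

section Gaussian

variable (v : ℝ≥0)

lemma gaussianReal_tilted_mul (m t : ℝ) :
    (gaussianReal m v).tilted (t * ·) = gaussianReal (m + v * t) v := by
  refine Measure.ext_of_complexMGF_id_eq (funext fun z ↦ ?_)
  have htilt := complexMGF_tilted_mul (X := id) (μ := gaussianReal m v) (t := t) z
  simp only [id_eq] at htilt
  rw [htilt, complexMGF_id_gaussianReal, complexMGF_id_gaussianReal, mgf_id_gaussianReal,
    Complex.ofReal_exp, ← Complex.exp_sub]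
  congr 1
  push_cast
  ring

lemma integral_tanh_mul_add_gaussianReal (t : ℝ) :
    ∫ z, tanh (t * z + v * t ^ 2) ∂(gaussianReal 0 v)
      = 1 - exp (-(v * t ^ 2 / 2)) * ∫ z, (cosh (t * z))⁻¹ ∂(gaussianReal 0 v) := by
  calc ∫ z, tanh (t * z + v * t ^ 2) ∂(gaussianReal 0 v)
      = ∫ z, tanh (t * (z + v * t)) ∂(gaussianReal 0 v) := by
        congr! 3 with z
        ring
    _ = ∫ x, tanh (t * x) ∂((gaussianReal 0 v).map (· + v * t)) :=
        (integral_map (by fun_prop)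
          (continuous_tanh.comp (continuous_const_mul t)).aestronglyMeasurable).symm
    _ = ∫ x, tanh (t * x) ∂((gaussianReal 0 v).tilted (t * ·)) := by
        rw [gaussianReal_map_add_const, gaussianReal_tilted_mul]
    _ = 1 - (mgf id (gaussianReal 0 v) t)⁻¹ * ∫ z, (cosh (t * z))⁻¹ ∂(gaussianReal 0 v) :=
        integral_tanh_tilted_mul (X := id) (integrable_exp_mul_gaussianReal t)
    _ = 1 - exp (-(v * t ^ 2 / 2)) * ∫ z, (cosh (t * z))⁻¹ ∂(gaussianReal 0 v) := by
        rw [mgf_id_gaussianReal, ← exp_neg, zero_mul, zero_add]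

lemma integral_tanh_sqrt_mul_add_gaussianReal {γ : ℝ} (hγ : 0 ≤ γ) :
    ∫ z, tanh (√γ * z + γ) ∂(gaussianReal 0 1)
      = 1 - exp (-(γ / 2)) * ∫ z, (cosh (√γ * z))⁻¹ ∂(gaussianReal 0 1) := by
  simpa [sq_sqrt hγ] using integral_tanh_mul_add_gaussianReal 1 (√γ)

end Gaussian

/-- `h(γ) = E[tanh(√γ·Z + γ)]` (`Z ~ N(0,1)`) is nondecreasing on `[0,∞)`,
`h(0) = 0`, and `h(γ) → 1` as `γ → ∞`. -/
theorem stmt7 :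
    MonotoneOn (fun γ : ℝ => ∫ z, Real.tanh (Real.sqrt γ * z + γ) ∂(gaussianReal 0 1))
      (Set.Ici 0)
    ∧ (∫ z, Real.tanh (Real.sqrt (0 : ℝ) * z + 0) ∂(gaussianReal 0 1)) = 0
    ∧ Tendsto (fun γ : ℝ => ∫ z, Real.tanh (Real.sqrt γ * z + γ) ∂(gaussianReal 0 1))
        atTop (nhds 1) := by
  have hdefect : Set.EqOn
      (fun γ : ℝ ↦ 1 - exp (-(γ / 2)) * ∫ z, (cosh (√γ * z))⁻¹ ∂(gaussianReal 0 1))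
      (fun γ ↦ ∫ z, tanh (√γ * z + γ) ∂(gaussianReal 0 1)) (Set.Ici 0) :=
    fun γ hγ ↦ (integral_tanh_sqrt_mul_add_gaussianReal hγ).symm
  refine ⟨?_, by simp, ?_⟩
  · have hanti := antitone_exp_mul_integral_inv_cosh (μ := gaussianReal 0 1) aestronglyMeasurable_id
    exact MonotoneOn.congr (fun a _ b _ hab ↦ sub_le_sub_left (hanti hab) 1) hdefect
  · have hlim := (tendsto_exp_mul_integral_inv_cosh (μ := gaussianReal 0 1) (X := id)).const_sub 1
    rw [sub_zero] at hlim
    exact hlim.congr' (hdefect.eventuallyEq_of_mem (Ici_mem_atTop 0))
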